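/- Let L be a finite-dimensional solvable Leibniz algebra over a field F with φ(L) = 0 which is minimally non-strongly-solvable (L is not strongly solvable but every proper subalgebra of L is strongly solvable). Then F has characteristic p > 0, and L = A + H is a semidirect sum where: (1) A is the unique minimal ideal of L, (2) dim A ≥ 2, (3) A·A = 0, and (4) either H = M ∔ Fx where M is a minimal abelian ideal of H, or H is the three-dimensional Heisenberg algebra. Moreover, either L is a Lie algebra, or else H is a Lie algebra, A = Leib(L), and A·L = 0. -/

import Mathlib

/-!
Basic theory of (left) Leibniz algebras, formalized over an arbitrary field `F`.
A Leibniz algebra structure on an `F`-vector space `L` is given by a bilinear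
multiplication `m : L →ₗ[F] L →ₗ[F] L` satisfying the left Leibniz identity.
-/

open Submodule Module

section LeibnizDefs

variable {F : Type*} [Field F] {L : Type*} [AddCommGroup L] [Module F L]
variable (m : L →ₗ[F] L →ₗ[F] L)

/-- The left Leibniz identity: `a(bc) = (ab)c + b(ac)`. -/
def IsLeibniz : Prop :=
  ∀ a b c : L, m a (m b c) = m (m a b) c + m b (m a c)

/-- The multiplication is antisymmetric, i.e. the algebra is a Lie algebra. -/
def IsLie : Prop := ∀ a b : L, m a b = - m b a

/-- The product of two subspaces: the span of all products `x·y`, `x ∈ P`, `y ∈ Q`. -/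
abbrev mprod (P Q : Submodule F L) : Submodule F L := Submodule.map₂ m P Q

/-- A subalgebra: a subspace closed under multiplication. -/
def IsSubalg (S : Submodule F L) : Prop := ∀ x ∈ S, ∀ y ∈ S, m x y ∈ S

/-- An ideal of `L`: a subspace `I` with `L·I ⊆ I` and `I·L ⊆ I`. -/
def IsIdeal (I : Submodule F L) : Prop :=
  ∀ (x : L), ∀ y ∈ I, m x y ∈ I ∧ m y x ∈ I

/-- An ideal `I` of a subalgebra `S`. -/
def IsIdealOf (S I : Submodule F L) : Prop :=
  I ≤ S ∧ ∀ x ∈ S, ∀ y ∈ I, m x y ∈ I ∧ m y x ∈ I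

/-- A minimal ideal: a nonzero ideal containing no nonzero proper subideal of `L`. -/
def IsMinIdeal (A : Submodule F L) : Prop :=
  IsIdeal m A ∧ A ≠ ⊥ ∧ ∀ J, IsIdeal m J → J ≤ A → J = ⊥ ∨ J = A

/-- The derived series of a subspace: `S^(0) = S`, `S^(n+1) = S^(n)·S^(n)`. -/
def derSeries (S : Submodule F L) : ℕ → Submodule F L
  | 0 => S
  | n + 1 => mprod m (derSeries S n) (derSeries S n)

/-- A subalgebra is solvable if its derived series reaches `0`. -/
def IsSolvableSub (S : Submodule F L) : Prop := ∃ n, derSeries m S n = ⊥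

/-- The Leibniz algebra `L` is solvable. -/
abbrev IsSolvableAlg : Prop := IsSolvableSub m (⊤ : Submodule F L)

/-- The lower central series of a subspace: `N^1 = N`, `N^(k+1) = N·N^k`. -/
def lcSeries (N : Submodule F L) : ℕ → Submodule F L
  | 0 => N
  | k + 1 => mprod m N (lcSeries N k)

/-- A subalgebra is nilpotent if its lower central series reaches `0`. -/
def IsNilpotentSub (N : Submodule F L) : Prop := ∃ k, lcSeries m N k = ⊥

/-- A subalgebra `S` is strongly solvable if `S² = S·S` is nilpotent. -/
def IsStronglySolvable (S : Submodule F L) : Prop :=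
  IsNilpotentSub m (mprod m S S)

/-- A maximal subalgebra: a proper subalgebra not contained in any larger proper
subalgebra. -/
def IsMaxSubalg (S : Submodule F L) : Prop :=
  IsSubalg m S ∧ S ≠ ⊤ ∧ ∀ T, IsSubalg m T → S ≤ T → T = S ∨ T = ⊤

/-- The Frattini subalgebra `F(L)`: the intersection of all maximal subalgebras. -/
def frattiniSub : Submodule F L := sInf {S | IsMaxSubalg m S}

/-- The Frattini ideal `φ(L)`: the largest ideal contained in the Frattini
subalgebra. -/
def frattiniIdeal : Submodule F L :=
  sSup {I | IsIdeal m I ∧ I ≤ frattiniSub m}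

/-- `Leib(L)`: the span of all squares `x·x`. -/
def leibIdeal : Submodule F L := Submodule.span F {z | ∃ x : L, z = m x x}

/-- The subalgebra generated by a set. -/
def genBy (s : Set L) : Submodule F L := sInf {S | IsSubalg m S ∧ s ⊆ S}

/-- A subalgebra is two-generated if it is generated as an algebra by two elements. -/
def TwoGenerated (S : Submodule F L) : Prop := ∃ x y : L, genBy m {x, y} = S

/-- A subalgebra `S` is supersolvable if there is a chain of ideals of `S`,
`0 = S₀ ⊂ S₁ ⊂ ⋯ ⊂ Sₙ = S`, with `dim Sᵢ = i`. -/
def IsSupersolvable (S : Submodule F L) : Prop :=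
  ∃ (n : ℕ) (c : ℕ → Submodule F L), c 0 = ⊥ ∧ c n = S ∧
    (∀ i, i < n → c i ≤ c (i + 1)) ∧
    (∀ i, i ≤ n → IsIdealOf m S (c i)) ∧
    (∀ i, i ≤ n → Module.finrank F (c i) = i)

/-- A subspace `S` is nil on `L` if left multiplication by each of its elements is a
nilpotent operator. -/
def IsNilOn (S : Submodule F L) : Prop :=
  ∀ x ∈ S, IsNilpotent (m x : Module.End F L)

open scoped TensorProduct in
/-- A subspace `S` is triangulable on `L` if, after extending scalars to the algebraic
closure `K` of `F`, the space `K ⊗ L` admits a basis with respect to which the left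
multiplication operators by all elements of `K ⊗ S` are upper triangular matrices.
(Since upper triangular matrices form a `K`-subspace of matrices, it suffices that the
base-changed left multiplication by each `x ∈ S` is upper triangular.) -/
def IsTriangulableOn (S : Submodule F L) : Prop :=
  ∃ (n : ℕ) (b : Basis (Fin n) (AlgebraicClosure F) ((AlgebraicClosure F) ⊗[F] L)),
    ∀ x ∈ S, ∀ i j : Fin n, j < i →
      LinearMap.toMatrix b b (LinearMap.baseChange (AlgebraicClosure F) (m x)) i j = 0

end LeibnizDefs

/-!
Let `A` be a minimal ideal. Solvability makes `A` abelian, and `φ(L) = 0` provides a maximal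
subalgebra `H` complementing it. As `H` is strongly solvable, some term of the lower central series
of `L²` lies in `A`; two distinct minimal ideals meet in `0`, so they would make `L` strongly
solvable. Uniqueness of `A` makes the action of `H` on `A` faithful and irreducible, and forces
`Leib(L)`, whose left action is trivial, to meet `H` in `0`; thus `H` is a Lie algebra.

If `B` is a proper subalgebra of `H` and `B²` is an ideal of `H`, then `A + B` is strongly solvable,
so `B²A ≠ A`, and irreducibility and faithfulness give `B² = 0`. Subspaces between `H²` and `H` are
ideals of `H`, so this leaves two cases: either `H = H² ∔ Fx` with `H²` minimal, or `H²` is central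
and any two non-commuting elements generate a Heisenberg algebra that is all of `H`.

In both cases every `u ∈ H²` has the form `[x, n]` with `[n, u] = 0`. In characteristic zero
Jacobson's lemma makes the action of `u` nilpotent, so the abelian ideal `H²` annihilates a nonzero
vector of `A`, hence all of `A` by irreducibility, contradicting faithfulness.
-/

section Jacobson

open Polynomial

variable {R E : Type*} [Ring E]

theorem lie_aeval_of_commute [CommSemiring R] [Algebra R E] {x n : E} (h : Commute n ⁅x, n⁆)
    (q : R[X]) : ⁅x, aeval n q⁆ = aeval n (derivative q) * ⁅x, n⁆ := by
  induction q using Polynomial.induction_on with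
  | C a => simp [Ring.lie_def, Algebra.commutes]
  | add p q hp hq =>
    have lie_add (b c : E) : ⁅x, b + c⁆ = ⁅x, b⁆ + ⁅x, c⁆ := by
      simp only [Ring.lie_def]; noncomm_ring
    simp only [map_add, lie_add, add_mul, hp, hq]
  | monomial k a ih =>
    have lie_mul (b : E) : ⁅x, b * n⁆ = ⁅x, b⁆ * n + b * ⁅x, n⁆ := by
      simp only [Ring.lie_def]; noncomm_ring
    rw [pow_succ, ← mul_assoc, derivative_mul, derivative_X, mul_one]
    simp only [map_mul, map_add, aeval_X] at ih ⊢
    rw [lie_mul, ih, add_mul, mul_assoc _ n, h.eq, ← mul_assoc]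

theorem aeval_derivative_mul_lie_pow_eq_zero [CommSemiring R] [Algebra R E] {x n : E}
    (h : Commute n ⁅x, n⁆) {q : R[X]} {j : ℕ} (hq : aeval n q * ⁅x, n⁆ ^ j = 0) :
    aeval n (derivative q) * ⁅x, n⁆ ^ (2 * j + 1) = 0 := by
  set u := ⁅x, n⁆
  have hcomm (p : R[X]) : Commute (u ^ j) (aeval n p) :=
    Algebra.commute_of_mem_adjoin_singleton_of_commute (aeval_mem_adjoin_singleton R n)
      (h.symm.pow_left j)
  calc aeval n (derivative q) * u ^ (2 * j + 1)
      = aeval n (derivative q) * u ^ j * u * u ^ j := by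
        rw [mul_assoc, mul_assoc, ← pow_succ', ← pow_add]; congr 2; ring
    _ = u ^ j * ⁅x, aeval n q⁆ * u ^ j := by
        rw [lie_aeval_of_commute h, ← mul_assoc, (hcomm _).eq]
    _ = u ^ j * x * (aeval n q * u ^ j) - u ^ j * aeval n q * (x * u ^ j) := by
        rw [Ring.lie_def]; noncomm_ring
    _ = 0 := by rw [(hcomm q).eq, hq, mul_zero, zero_mul, sub_zero]

variable [CommRing R] [IsDomain R] [CharZero R] [Algebra R E] [IsTorsionFree R E]

theorem isNilpotent_lie_of_aeval_mul_pow_eq_zero {x n : E} (h : Commute n ⁅x, n⁆) {q : R[X]}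
    {j : ℕ} (hq0 : q ≠ 0) (hq : aeval n q * ⁅x, n⁆ ^ j = 0) : IsNilpotent ⁅x, n⁆ := by
  induction hd : q.natDegree generalizing q j with
  | zero =>
    obtain ⟨c, rfl⟩ := natDegree_eq_zero.mp hd
    rw [aeval_C, ← Algebra.smul_def] at hq
    exact ⟨j, (smul_eq_zero_iff_right (C_ne_zero.mp hq0)).mp hq⟩
  | succ d ih =>
    have hq0' : derivative q ≠ 0 := derivative_eq_zero.not.mpr (hd ▸ d.succ_ne_zero)
    have hd' : (derivative q).natDegree = d := by
      rw [natDegree_derivative, hd, Nat.add_sub_cancel]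
    exact ih hq0' (aeval_derivative_mul_lie_pow_eq_zero h hq) hd'

/-- **Jacobson's lemma**. -/
theorem isNilpotent_lie_of_commute {x n : E} (hn : IsAlgebraic R n) (h : Commute n ⁅x, n⁆) :
    IsNilpotent ⁅x, n⁆ := by
  obtain ⟨q, hq0, hq⟩ := hn
  exact isNilpotent_lie_of_aeval_mul_pow_eq_zero h hq0 (j := 0) (by rw [hq, zero_mul])

end Jacobson

section LinearAlgebra

theorem mem_sup_span_singleton {R V : Type*} [Semiring R] [AddCommMonoid V] [Module R V]
    {M : Submodule R V} {x y : V} :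
    y ∈ M ⊔ span R {x} ↔ ∃ a ∈ M, ∃ c : R, a + c • x = y := by
  simp only [mem_sup, mem_span_singleton, exists_exists_eq_and]

theorem eq_bot_of_map_eq_self_of_isNilpotent {R V : Type*} [Semiring R] [AddCommMonoid V]
    [Module R V] {f : Module.End R V} (hf : IsNilpotent f) {W : Submodule R V}
    (hW : W.map f = W) : W = ⊥ := by
  obtain ⟨k, hk⟩ := hf
  have hpow (i : ℕ) : W.map (f ^ i) = W := by
    induction i with
    | zero => exact map_id W
    | succ i ih => rw [pow_succ, Module.End.mul_eq_comp, map_comp, hW, ih]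
  rw [← hpow k, hk, Submodule.map_zero]

theorem exists_ne_zero_forall_apply_eq_zero_of_commute {R V : Type*} [Ring R] [AddCommGroup V]
    [Module R V] [IsArtinian R V] {S : Set (Module.End R V)}
    (hcomm : ∀ f ∈ S, ∀ g ∈ S, Commute f g) (hnil : ∀ f ∈ S, IsNilpotent f)
    {A : Submodule R V} (hA : A ≠ ⊥) (hSA : ∀ f ∈ S, A.map f ≤ A) :
    ∃ a ∈ A, a ≠ 0 ∧ ∀ f ∈ S, f a = 0 := by
  obtain ⟨W, ⟨hW, hWA, hSW⟩, hmin⟩ := IsArtinian.set_has_minimal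
    {W : Submodule R V | W ≠ ⊥ ∧ W ≤ A ∧ ∀ f ∈ S, W.map f ≤ W} ⟨A, hA, le_rfl, hSA⟩
  have hkill (f) (hf : f ∈ S) : W.map f = ⊥ := by
    by_contra hne
    have hinv (g) (hg : g ∈ S) : (W.map f).map g ≤ W.map f :=
      calc (W.map f).map g = (W.map g).map f := by
            rw [← map_comp, ← map_comp, ← Module.End.mul_eq_comp,
              ← Module.End.mul_eq_comp, (hcomm f hf g hg).eq]
        _ ≤ W.map f := map_mono (hSW g hg)
    have hmap : W.map f = W :=
      eq_of_le_of_not_lt (hSW f hf) (hmin _ ⟨hne, (hSW f hf).trans hWA, hinv⟩)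
    exact hW (eq_bot_of_map_eq_self_of_isNilpotent (hnil f hf) hmap)
  obtain ⟨a, ha, ha0⟩ := exists_mem_ne_zero_of_ne_bot hW
  exact ⟨a, hWA ha, ha0, fun f hf =>
    (mem_bot R).mp (hkill f hf ▸ mem_map_of_mem ha)⟩

theorem exists_forall_apply_eq_smul_of_finrank_eq_one {K V : Type*} [Field K] [AddCommGroup V]
    [Module K V] {A : Submodule K V} (hA : finrank K A = 1) {f : V →ₗ[K] V}
    (hf : ∀ a ∈ A, f a ∈ A) : ∃ c : K, ∀ a ∈ A, f a = c • a := by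
  obtain ⟨c, hc, -⟩ := LinearMap.existsUnique_eq_smul_id_of_finrank_eq_one hA (f.restrict hf)
  exact ⟨c, fun a ha => congrArg Subtype.val (LinearMap.congr_fun hc ⟨a, ha⟩)⟩

theorem disjoint_ker_of_map_eq_self {K V : Type*} [Field K] [AddCommGroup V] [Module K V]
    {W : Submodule K V} [FiniteDimensional K W] {f : V →ₗ[K] V} (hf : W.map f = W) :
    Disjoint W (LinearMap.ker f) := by
  have hfW : ∀ w ∈ W, f w ∈ W := fun w hw => hf.le (mem_map_of_mem hw)
  have hsurj : Function.Surjective (f.restrict hfW) := by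
    rintro ⟨w, hw⟩
    obtain ⟨v, hv, rfl⟩ := hf.ge hw
    exact ⟨⟨v, hv⟩, rfl⟩
  rw [← LinearMap.injective_restrict_iff hfW]
  exact LinearMap.injective_iff_surjective.mpr hsurj

end LinearAlgebra

section Leibniz

variable {F : Type*} [Field F] {L : Type*} [AddCommGroup L] [Module F L]
variable {m : L →ₗ[F] L →ₗ[F] L} {A A' B H I J M N P Q S T : Submodule F L}

theorem mprod_eq_bot_iff : mprod m P Q = ⊥ ↔ ∀ x ∈ P, ∀ y ∈ Q, m x y = 0 := by
  simp only [eq_bot_iff, map₂_le, mem_bot]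

theorem mul_eq_neg_of_forall_mul_self_eq_zero (hS : ∀ x ∈ S, m x x = 0) {a b : L} (ha : a ∈ S)
    (hb : b ∈ S) : m a b = -m b a := by
  have hab := hS (a + b) (add_mem ha hb)
  simp only [map_add, LinearMap.add_apply, hS a ha, hS b hb, zero_add, add_zero] at hab
  exact eq_neg_of_add_eq_zero_right hab

theorem mul_self_mem_leibIdeal (x : L) : m x x ∈ leibIdeal m := subset_span ⟨x, rfl⟩

theorem mul_add_mul_mem_leibIdeal (a b : L) : m a b + m b a ∈ leibIdeal m := by
  have hpolar : m a b + m b a = m (a + b) (a + b) - m a a - m b b := by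
    simp only [map_add, LinearMap.add_apply]; abel
  rw [hpolar]
  exact sub_mem (sub_mem (mul_self_mem_leibIdeal _) (mul_self_mem_leibIdeal _))
    (mul_self_mem_leibIdeal _)

namespace IsLeibniz

theorem mul_mul_eq_sub (hm : IsLeibniz m) (a b c : L) :
    m (m a b) c = m a (m b c) - m b (m a c) := by
  rw [hm a b c, add_sub_cancel_right]

theorem coe_mul_eq_lie (hm : IsLeibniz m) (a b : L) :
    (m (m a b) : Module.End F L) = ⁅(m a : Module.End F L), (m b : Module.End F L)⁆ :=
  LinearMap.ext fun c => hm.mul_mul_eq_sub a b c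

theorem mul_mem_mprod (hm : IsLeibniz m) {x : L} (hP : ∀ p ∈ P, m x p ∈ P)
    (hQ : ∀ q ∈ Q, m x q ∈ Q) : ∀ z ∈ mprod m P Q, m x z ∈ mprod m P Q := by
  have hle : mprod m P Q ≤ (mprod m P Q).comap (m x) := map₂_le.mpr fun p hp q hq => by
    rw [mem_comap, hm]
    exact add_mem (apply_mem_map₂ m (hP p hp) hq) (apply_mem_map₂ m hp (hQ q hq))
  exact hle

theorem mul_eq_zero_of_mem_leibIdeal (hm : IsLeibniz m) {a : L} (ha : a ∈ leibIdeal m) (u : L) :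
    m a u = 0 := by
  have hle : leibIdeal m ≤ LinearMap.ker (m.flip u) := span_le.mpr <| by
    rintro _ ⟨x, rfl⟩
    exact (hm.mul_mul_eq_sub x x u).trans (sub_self _)
  exact hle ha

theorem isIdeal_leibIdeal (hm : IsLeibniz m) : IsIdeal m (leibIdeal m) := by
  intro x y hy
  have hyx : m y x = 0 := hm.mul_eq_zero_of_mem_leibIdeal hy x
  refine ⟨?_, hyx ▸ zero_mem _⟩
  simpa only [hyx, add_zero] using mul_add_mul_mem_leibIdeal (m := m) x y

theorem isNilpotent_mul_of_mul_eq_zero [CharZero F] [FiniteDimensional F L] (hm : IsLeibniz m)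
    {x n : L} (hn : m n (m x n) = 0) : IsNilpotent (m (m x n) : Module.End F L) := by
  have hcomm : Commute (m n : Module.End F L) (m (m x n)) := by
    rw [commute_iff_lie_eq, ← hm.coe_mul_eq_lie, hn, map_zero]
  rw [hm.coe_mul_eq_lie] at hcomm ⊢
  exact isNilpotent_lie_of_commute (Algebra.IsAlgebraic.isAlgebraic (R := F) _) hcomm

end IsLeibniz

theorem isIdeal_iff_isIdealOf_top : IsIdeal m I ↔ IsIdealOf m ⊤ I :=
  ⟨fun h => ⟨le_top, fun x _ => h x⟩, fun h x => h.2 x mem_top⟩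

theorem isIdealOf_of_mprod_le (hIS : I ≤ S) (hI : mprod m S S ≤ I) : IsIdealOf m S I :=
  ⟨hIS, fun _ hx _ hy =>
    ⟨hI (apply_mem_map₂ m hx (hIS hy)), hI (apply_mem_map₂ m (hIS hy) hx)⟩⟩

theorem isIdealOf_of_forall_mul_self_eq_zero (hS : ∀ x ∈ S, m x x = 0) (hIS : I ≤ S)
    (hI : ∀ x ∈ S, ∀ y ∈ I, m x y ∈ I) : IsIdealOf m S I := by
  refine ⟨hIS, fun x hx y hy => ⟨hI x hx y hy, ?_⟩⟩
  rw [mul_eq_neg_of_forall_mul_self_eq_zero hS (hIS hy) hx]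
  exact neg_mem (hI x hx y hy)

theorem isIdeal_of_sup_eq_top (hAH : A ⊔ H = ⊤) (hA : ∀ a ∈ A, ∀ y ∈ I, m a y ∈ I ∧ m y a ∈ I)
    (hH : ∀ x ∈ H, ∀ y ∈ I, m x y ∈ I ∧ m y x ∈ I) : IsIdeal m I := by
  intro x y hy
  obtain ⟨a, ha, h, hh, rfl⟩ := mem_sup.mp (hAH ▸ mem_top : x ∈ A ⊔ H)
  simp only [map_add, LinearMap.add_apply]
  exact ⟨add_mem (hA a ha y hy).1 (hH h hh y hy).1, add_mem (hA a ha y hy).2 (hH h hh y hy).2⟩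

theorem IsSubalg.mprod_le (hS : IsSubalg m S) : mprod m S S ≤ S := map₂_le.mpr hS

theorem IsIdealOf.isSubalg (hI : IsIdealOf m S I) : IsSubalg m I :=
  fun x hx y hy => (hI.2 x (hI.1 hx) y hy).1

theorem IsIdealOf.mprod_self (hm : IsLeibniz m) (hI : IsIdealOf m S I) :
    IsIdealOf m S (mprod m I I) := by
  refine ⟨hI.isSubalg.mprod_le.trans hI.1, fun x hx y hy => ⟨?_, ?_⟩⟩
  · exact hm.mul_mem_mprod (fun p hp => (hI.2 x hx p hp).1) (fun p hp => (hI.2 x hx p hp).1) y hy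
  · have hle : mprod m I I ≤ (mprod m I I).comap (m.flip x) := map₂_le.mpr fun p hp q hq => by
      rw [mem_comap, LinearMap.flip_apply, hm.mul_mul_eq_sub]
      exact sub_mem (apply_mem_map₂ m hp (hI.2 x hx q hq).2)
        (apply_mem_map₂ m hq (hI.2 x hx p hp).2)
    exact hle hy

namespace IsIdeal

theorem inf (hI : IsIdeal m I) (hJ : IsIdeal m J) : IsIdeal m (I ⊓ J) := fun x y hy =>
  ⟨⟨(hI x y hy.1).1, (hJ x y hy.2).1⟩, ⟨(hI x y hy.1).2, (hJ x y hy.2).2⟩⟩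

theorem isIdealOf_inf (hI : IsIdeal m I) (hS : IsSubalg m S) : IsIdealOf m S (I ⊓ S) :=
  ⟨inf_le_right, fun x hx y hy =>
    ⟨⟨(hI x y hy.1).1, hS x hx y hy.2⟩, ⟨(hI x y hy.1).2, hS y hy.2 x hx⟩⟩⟩

theorem mprod_le (hA : IsIdeal m A) : mprod m P A ≤ A :=
  map₂_le.mpr fun x _ a ha => (hA x a ha).1

theorem mprod_sup_le (hA : IsIdeal m A) : mprod m (A ⊔ P) (A ⊔ Q) ≤ A ⊔ mprod m P Q := by
  have hAQ : mprod m A (A ⊔ Q) ≤ A := map₂_le.mpr fun a ha x _ => (hA x a ha).2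
  calc mprod m (A ⊔ P) (A ⊔ Q) = mprod m A (A ⊔ Q) ⊔ (mprod m P A ⊔ mprod m P Q) :=
        (map₂_sup_left m A P (A ⊔ Q)).trans (congrArg _ (map₂_sup_right m P A Q))
    _ ≤ A ⊔ (A ⊔ mprod m P Q) := sup_le_sup hAQ (sup_le_sup_right hA.mprod_le _)
    _ = A ⊔ mprod m P Q := by rw [← sup_assoc, sup_idem]

theorem isSubalg_sup (hA : IsIdeal m A) (hB : IsSubalg m B) : IsSubalg m (A ⊔ B) :=
  map₂_le.mp (hA.mprod_sup_le.trans (sup_le_sup_left hB.mprod_le A))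

theorem lcSeries_mprod_sup_le (hA : IsIdeal m A) (k : ℕ) :
    lcSeries m (mprod m (A ⊔ S) (A ⊔ S)) k ≤ A ⊔ lcSeries m (mprod m S S) k := by
  induction k with
  | zero => exact hA.mprod_sup_le
  | succ k ih => exact (map₂_le_map₂ hA.mprod_sup_le ih).trans hA.mprod_sup_le

end IsIdeal

theorem IsSubalg.antitone_lcSeries (hS : IsSubalg m S) : Antitone (lcSeries m S) := by
  refine antitone_nat_of_succ_le fun k => ?_
  induction k with
  | zero => exact hS.mprod_le
  | succ k ih => exact map₂_le_map₂ le_rfl ih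

theorem IsNilpotentSub.eq_bot_of_le_mprod (hN : IsNilpotentSub m N) (hSN : S ≤ N)
    (hS : S ≤ mprod m N S) : S = ⊥ := by
  obtain ⟨k, hk⟩ := hN
  rw [eq_bot_iff, ← hk]
  clear hk
  induction k with
  | zero => exact hSN
  | succ k ih => exact hS.trans (map₂_le_map₂ le_rfl ih)

theorem IsSolvableSub.eq_bot_of_le_mprod_self (hT : IsSolvableSub m T) (hST : S ≤ T)
    (hS : S ≤ mprod m S S) : S = ⊥ := by
  obtain ⟨k, hk⟩ := hT
  rw [eq_bot_iff, ← hk]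
  clear hk
  induction k with
  | zero => exact hST
  | succ k ih => exact hS.trans (map₂_le_map₂ ih ih)

theorem exists_isMinIdeal_le [FiniteDimensional F L] (hI : IsIdeal m I) (hI0 : I ≠ ⊥) :
    ∃ A, IsMinIdeal m A ∧ A ≤ I := by
  obtain ⟨A, ⟨hA, hA0, hAI⟩, hmin⟩ := IsArtinian.set_has_minimal
    {J | IsIdeal m J ∧ J ≠ ⊥ ∧ J ≤ I} ⟨I, hI, hI0, le_rfl⟩
  refine ⟨A, ⟨hA, hA0, fun J hJ hJA => or_iff_not_imp_left.mpr fun hJ0 => ?_⟩, hAI⟩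
  exact eq_of_le_of_not_lt hJA (hmin J ⟨hJ, hJ0, hJA.trans hAI⟩)

namespace IsMinIdeal

theorem mprod_self_eq_bot (hm : IsLeibniz m) (hsolv : IsSolvableAlg m) (hA : IsMinIdeal m A) :
    mprod m A A = ⊥ := by
  have hAA : IsIdeal m (mprod m A A) :=
    isIdeal_iff_isIdealOf_top.mpr ((isIdeal_iff_isIdealOf_top.mp hA.1).mprod_self hm)
  exact (hA.2.2 _ hAA hA.1.mprod_le).resolve_right fun heq =>
    hA.2.1 (hsolv.eq_bot_of_le_mprod_self le_top heq.ge)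

theorem inf_eq_bot_of_ne (hA : IsMinIdeal m A) (hA' : IsMinIdeal m A') (hne : A ≠ A') :
    A ⊓ A' = ⊥ := by
  have hinf : IsIdeal m (A ⊓ A') := hA.1.inf hA'.1
  refine (hA.2.2 _ hinf inf_le_left).resolve_right fun hl => ?_
  rcases hA'.2.2 _ hinf inf_le_right with hr | hr
  · exact hA.2.1 (hl.symm.trans hr)
  · exact hne (hl.symm.trans hr)

theorem mul_mem_of_mul_mem (hm : IsLeibniz m) (hA : IsMinIdeal m A) {a u : L} (ha : a ∈ A)
    (hua : m u a ∈ J) : m a u ∈ J := by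
  rcases hA.2.2 _ (hA.1.inf hm.isIdeal_leibIdeal) inf_le_left with hinf | hinf
  · have hadd : m a u + m u a ∈ A ⊓ leibIdeal m :=
      ⟨add_mem (hA.1 u a ha).2 (hA.1 u a ha).1, mul_add_mul_mem_leibIdeal a u⟩
    rw [hinf, mem_bot] at hadd
    rw [eq_neg_of_add_eq_zero_left hadd]
    exact neg_mem hua
  · rw [hm.mul_eq_zero_of_mem_leibIdeal (inf_eq_left.mp hinf ha) u]
    exact zero_mem J

end IsMinIdeal

theorem exists_isMaxSubalg_not_le (hphi : frattiniIdeal m = ⊥) (hI : IsIdeal m I) (hI0 : I ≠ ⊥) :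
    ∃ H, IsMaxSubalg m H ∧ ¬I ≤ H := by
  by_contra! hle
  exact hI0 (eq_bot_iff.mpr (hphi ▸ le_sSup ⟨hI, le_sInf hle⟩))

/-- `L` is the semidirect sum `A ∔ H` of a minimal ideal `A` with `A·A = 0` and a subalgebra `H`. -/
structure IsSplitting (m : L →ₗ[F] L →ₗ[F] L) (A H : Submodule F L) : Prop where
  isMinIdeal : IsMinIdeal m A
  mprod_self : mprod m A A = ⊥
  isSubalg : IsSubalg m H
  isCompl : IsCompl A H

theorem IsMinIdeal.exists_isSplitting (hm : IsLeibniz m) (hsolv : IsSolvableAlg m)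
    (hphi : frattiniIdeal m = ⊥) (hA : IsMinIdeal m A) : ∃ H, IsSplitting m A H := by
  have hAA := hA.mprod_self_eq_bot hm hsolv
  obtain ⟨H, ⟨hH, -, hmax⟩, hAH⟩ := exists_isMaxSubalg_not_le hphi hA.1 hA.2.1
  have hsup : A ⊔ H = ⊤ :=
    (hmax _ (hA.1.isSubalg_sup hH) le_sup_right).resolve_left fun h => hAH (sup_eq_right.mp h)
  have hinf : IsIdeal m (A ⊓ H) := by
    rw [mprod_eq_bot_iff] at hAA
    refine isIdeal_of_sup_eq_top hsup (fun a ha y hy => ?_) (hA.1.isIdealOf_inf hH).2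
    rw [hAA a ha y hy.1, hAA y hy.1 a ha]
    exact ⟨zero_mem _, zero_mem _⟩
  have hbot : A ⊓ H = ⊥ :=
    (hA.2.2 _ hinf inf_le_left).resolve_right fun h => hAH (inf_eq_left.mp h)
  exact ⟨H, hA, hAA, hH, disjoint_iff.mpr hbot, codisjoint_iff.mpr hsup⟩

namespace IsSplitting

theorem ne_top (h : IsSplitting m A H) : H ≠ ⊤ := by
  rintro rfl
  exact h.isMinIdeal.2.1 (disjoint_top.mp h.isCompl.disjoint)

theorem sup_ne_top_of_lt (h : IsSplitting m A H) (hBH : B < H) : A ⊔ B ≠ ⊤ := by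
  intro hAB
  refine hBH.ne (eq_of_le_of_inf_le_of_sup_le (z := A) hBH.le ?_ ?_)
  · rw [inf_comm, h.isCompl.inf_eq_bot]; exact bot_le
  · rw [sup_comm B, hAB]; exact le_top

theorem exists_lcSeries_le (h : IsSplitting m A H) (hH : IsStronglySolvable m H) :
    ∃ k, lcSeries m (mprod m ⊤ ⊤) k ≤ A := by
  obtain ⟨k, hk⟩ := hH
  refine ⟨k, ?_⟩
  have hle := h.isMinIdeal.1.lcSeries_mprod_sup_le (S := H) k
  rwa [h.isCompl.sup_eq_top, hk, sup_bot_eq] at hle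

theorem mprod_self_ne_bot (h : IsSplitting m A H) (hnotss : ¬IsStronglySolvable m ⊤) :
    mprod m H H ≠ ⊥ := by
  intro hHH
  have hle : mprod m ⊤ ⊤ ≤ A := by
    have hsup := h.isMinIdeal.1.mprod_sup_le (P := H) (Q := H)
    rwa [h.isCompl.sup_eq_top, hHH, sup_bot_eq] at hsup
  exact hnotss ⟨1, eq_bot_iff.mpr (h.mprod_self ▸ map₂_le_map₂ hle hle)⟩

theorem eq_bot_or_eq (hm : IsLeibniz m) (h : IsSplitting m A H) (hJA : J ≤ A)
    (hJ : ∀ x ∈ H, ∀ y ∈ J, m x y ∈ J) : J = ⊥ ∨ J = A := by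
  refine h.isMinIdeal.2.2 J ?_ hJA
  refine isIdeal_of_sup_eq_top h.isCompl.sup_eq_top (fun a ha y hy => ?_) fun x hx y hy =>
    ⟨hJ x hx y hy, h.isMinIdeal.mul_mem_of_mul_mem hm (hJA hy) (hJ x hx y hy)⟩
  have hAA := mprod_eq_bot_iff.mp h.mprod_self
  rw [hAA a ha y (hJA hy), hAA y (hJA hy) a ha]
  exact ⟨zero_mem J, zero_mem J⟩

variable [FiniteDimensional F L]

theorem eq_bot_of_isIdealOf (hm : IsLeibniz m) (h : IsSplitting m A H)
    (huniq : ∀ A', IsMinIdeal m A' → A' = A) (hI : IsIdealOf m H I) (hIA : mprod m I A = ⊥) :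
    I = ⊥ := by
  have hideal : IsIdeal m I := by
    refine isIdeal_of_sup_eq_top h.isCompl.sup_eq_top (fun a ha y hy => ?_) hI.2
    have hya : m y a ∈ (⊥ : Submodule F L) := hIA ▸ apply_mem_map₂ m hy ha
    exact ⟨bot_le (a := I) (h.isMinIdeal.mul_mem_of_mul_mem hm ha hya), bot_le (a := I) hya⟩
  by_contra hI0
  obtain ⟨A', hA', hA'I⟩ := exists_isMinIdeal_le hideal hI0
  obtain rfl := huniq A' hA'
  exact hA'.2.1 (disjoint_self.mp (h.isCompl.disjoint.mono_right (hA'I.trans hI.1)))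

theorem disjoint_leibIdeal (hm : IsLeibniz m) (h : IsSplitting m A H)
    (huniq : ∀ A', IsMinIdeal m A' → A' = A) : Disjoint (leibIdeal m) H :=
  disjoint_iff.mpr <|
    h.eq_bot_of_isIdealOf hm huniq (hm.isIdeal_leibIdeal.isIdealOf_inf h.isSubalg) <|
      mprod_eq_bot_iff.mpr fun _ hx a _ => hm.mul_eq_zero_of_mem_leibIdeal hx.1 a

theorem mul_self_eq_zero (hm : IsLeibniz m) (h : IsSplitting m A H)
    (huniq : ∀ A', IsMinIdeal m A' → A' = A) : ∀ x ∈ H, m x x = 0 := fun x hx =>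
  disjoint_def.mp (h.disjoint_leibIdeal hm huniq) _ (mul_self_mem_leibIdeal x)
    (h.isSubalg x hx x hx)

theorem isLie_or_eq_leibIdeal (hm : IsLeibniz m) (h : IsSplitting m A H)
    (huniq : ∀ A', IsMinIdeal m A' → A' = A) : IsLie m ∨ A = leibIdeal m := by
  by_cases hleib : leibIdeal m = ⊥
  · have hsq : ∀ x ∈ (⊤ : Submodule F L), m x x = 0 := fun x _ =>
      (mem_bot F).mp (hleib ▸ mul_self_mem_leibIdeal x)
    exact .inl fun a b => mul_eq_neg_of_forall_mul_self_eq_zero hsq mem_top mem_top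
  · obtain ⟨A', hA', hle⟩ := exists_isMinIdeal_le hm.isIdeal_leibIdeal hleib
    obtain rfl := huniq A' hA'
    refine .inr (eq_of_le_of_inf_le_of_sup_le (z := H) hle ?_ ?_)
    · rw [(h.disjoint_leibIdeal hm huniq).eq_bot]; exact bot_le
    · rw [h.isCompl.sup_eq_top]; exact le_top

theorem mprod_self_eq_bot_of_isStronglySolvable_sup (hm : IsLeibniz m) (h : IsSplitting m A H)
    (huniq : ∀ A', IsMinIdeal m A' → A' = A) (hB : IsSubalg m B)
    (hAB : IsStronglySolvable m (A ⊔ B)) (hBB : IsIdealOf m H (mprod m B B)) :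
    mprod m B B = ⊥ := by
  refine h.eq_bot_of_isIdealOf hm huniq hBB ?_
  have hinv : ∀ x ∈ H, ∀ y ∈ mprod m (mprod m B B) A, m x y ∈ mprod m (mprod m B B) A :=
    fun x hx => hm.mul_mem_mprod (fun b hb => (hBB.2 x hx b hb).1)
      fun a ha => (h.isMinIdeal.1 x a ha).1
  refine (h.eq_bot_or_eq hm h.isMinIdeal.1.mprod_le hinv).resolve_right fun heq => ?_
  refine h.isMinIdeal.2.1 (IsNilpotentSub.eq_bot_of_le_mprod hAB ?_ ?_)
  · calc A = mprod m (mprod m B B) A := heq.symm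
      _ ≤ mprod m (A ⊔ B) (A ⊔ B) :=
        map₂_le_map₂ (hB.mprod_le.trans le_sup_right) le_sup_left
  · calc A = mprod m (mprod m B B) A := heq.symm
      _ ≤ mprod m (mprod m (A ⊔ B) (A ⊔ B)) A :=
        map₂_le_map₂ (map₂_le_map₂ le_sup_right le_sup_right) le_rfl

theorem eq_bot_of_forall_isNilpotent (hm : IsLeibniz m) (h : IsSplitting m A H)
    (huniq : ∀ A', IsMinIdeal m A' → A' = A) (hI : IsIdealOf m H I) (hII : mprod m I I = ⊥)
    (hnil : ∀ u ∈ I, IsNilpotent (m u : Module.End F L)) : I = ⊥ := by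
  set W : Submodule F L := A ⊓ ⨅ u ∈ I, LinearMap.ker (m u)
  have mem_W {a : L} : a ∈ W ↔ a ∈ A ∧ ∀ u ∈ I, m u a = 0 := by
    simp only [W, mem_inf, mem_iInf, LinearMap.mem_ker]
  have hW0 : W ≠ ⊥ := by
    obtain ⟨a, ha, ha0, hker⟩ := exists_ne_zero_forall_apply_eq_zero_of_commute
      (S := m '' (I : Set L)) (A := A) (Set.forall_mem_image.mpr fun u hu =>
        Set.forall_mem_image.mpr fun v hv => by
          rw [commute_iff_lie_eq, ← hm.coe_mul_eq_lie, mprod_eq_bot_iff.mp hII u hu v hv, map_zero])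
      (Set.forall_mem_image.mpr hnil) h.isMinIdeal.2.1
      (Set.forall_mem_image.mpr fun u _ => map_le_iff_le_comap.mpr fun a ha =>
        (h.isMinIdeal.1 u a ha).1)
    exact (Submodule.ne_bot_iff W).mpr ⟨a, mem_W.mpr ⟨ha, Set.forall_mem_image.mp hker⟩, ha0⟩
  have hHW : ∀ x ∈ H, ∀ a ∈ W, m x a ∈ W := by
    intro x hx a ha
    obtain ⟨haA, ha⟩ := mem_W.mp ha
    refine mem_W.mpr ⟨(h.isMinIdeal.1 x a haA).1, fun u hu => ?_⟩
    rw [hm, ha _ (hI.2 x hx u hu).2, ha u hu, map_zero, zero_add]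
  have hWA : W = A := (h.eq_bot_or_eq hm inf_le_left hHW).resolve_left hW0
  exact h.eq_bot_of_isIdealOf hm huniq hI <| mprod_eq_bot_iff.mpr fun u hu a ha =>
    (mem_W.mp (hWA ▸ ha)).2 u hu

theorem two_le_finrank (hm : IsLeibniz m) (h : IsSplitting m A H)
    (huniq : ∀ A', IsMinIdeal m A' → A' = A) (hHH : mprod m H H ≠ ⊥) :
    2 ≤ finrank F A := by
  have hA0 : finrank F A ≠ 0 := finrank_eq_zero.not.mpr h.isMinIdeal.2.1
  suffices hA1 : finrank F A ≠ 1 by omega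
  intro hA1
  have hideal : IsIdealOf m H (mprod m H H) := isIdealOf_of_mprod_le h.isSubalg.mprod_le le_rfl
  refine hHH (h.eq_bot_of_isIdealOf hm huniq hideal (mprod_eq_bot_iff.mpr fun u hu a ha => ?_))
  have hle : mprod m H H ≤ LinearMap.ker (m.flip a) := map₂_le.mpr fun x _ y _ => by
    obtain ⟨c, hc⟩ := exists_forall_apply_eq_smul_of_finrank_eq_one hA1
      fun a ha => (h.isMinIdeal.1 x a ha).1
    obtain ⟨d, hd⟩ := exists_forall_apply_eq_smul_of_finrank_eq_one hA1
      fun a ha => (h.isMinIdeal.1 y a ha).1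
    rw [LinearMap.mem_ker, LinearMap.flip_apply, hm.mul_mul_eq_sub, hd a ha, hc a ha, map_smul,
      map_smul, hc a ha, hd a ha, smul_comm, sub_self]
  exact hle hu

end IsSplitting

theorem exists_isSplitting [FiniteDimensional F L] (hm : IsLeibniz m) (hsolv : IsSolvableAlg m)
    (hphi : frattiniIdeal m = ⊥) (hnotss : ¬IsStronglySolvable m ⊤)
    (hproper : ∀ S : Submodule F L, IsSubalg m S → S ≠ ⊤ → IsStronglySolvable m S) :
    ∃ A H, IsSplitting m A H ∧ ∀ A', IsMinIdeal m A' → A' = A := by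
  have htop : (⊤ : Submodule F L) ≠ ⊥ := fun htop =>
    hnotss ⟨0, eq_bot_iff.mpr (htop ▸ le_top)⟩
  have hlc {A : Submodule F L} (hA : IsMinIdeal m A) : ∃ k, lcSeries m (mprod m ⊤ ⊤) k ≤ A := by
    obtain ⟨H, h⟩ := hA.exists_isSplitting hm hsolv hphi
    exact h.exists_lcSeries_le (hproper H h.isSubalg h.ne_top)
  obtain ⟨A, hA, -⟩ := exists_isMinIdeal_le (m := m) (I := ⊤)
    (fun _ _ _ => ⟨mem_top, mem_top⟩) htop
  obtain ⟨H, h⟩ := hA.exists_isSplitting hm hsolv hphi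
  refine ⟨A, H, h, fun A' hA' => ?_⟩
  by_contra hne
  obtain ⟨k, hk⟩ := hlc hA
  obtain ⟨k', hk'⟩ := hlc hA'
  have hanti : Antitone (lcSeries m (mprod m ⊤ ⊤)) := IsSubalg.antitone_lcSeries
    fun x _ y _ => apply_mem_map₂ m mem_top mem_top
  refine hnotss ⟨max k k', eq_bot_iff.mpr ?_⟩
  rw [← hA.inf_eq_bot_of_ne hA' (Ne.symm hne)]
  exact le_inf ((hanti (le_max_left k k')).trans hk) ((hanti (le_max_right k k')).trans hk')

/-- `H = M ∔ Fx` for a minimal ideal `M` of `H` with `M·M = 0`. -/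
def IsMinAbelianByLine (m : L →ₗ[F] L →ₗ[F] L) (H : Submodule F L) : Prop :=
  ∃ (M : Submodule F L) (x : L),
    IsIdealOf m H M ∧ M ≠ ⊥ ∧
    (∀ J, IsIdealOf m H J → J ≤ M → J = ⊥ ∨ J = M) ∧
    (∀ a ∈ M, ∀ b ∈ M, m a b = 0) ∧
    x ∈ H ∧ M ⊓ span F {x} = ⊥ ∧ M ⊔ span F {x} = H

/-- The multiplication table of the three-dimensional Heisenberg algebra. -/
def HeisenbergRelations (m : L →ₗ[F] L →ₗ[F] L) (x y z : L) : Prop :=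
  m y x = z ∧ m x y = -z ∧ m x z = 0 ∧ m z x = 0 ∧ m y z = 0 ∧ m z y = 0 ∧
    m x x = 0 ∧ m y y = 0 ∧ m z z = 0

/-- The subspace `H` is a three-dimensional Heisenberg algebra. -/
def IsHeisenberg (m : L →ₗ[F] L →ₗ[F] L) (H : Submodule F L) : Prop :=
  ∃ x y z : L, x ∈ H ∧ y ∈ H ∧ z ∈ H ∧
    LinearIndependent F ![x, y, z] ∧ span F {x, y, z} = H ∧ HeisenbergRelations m x y z

theorem mprod_le_map_of_sup_span_eq {x : L} (hH : ∀ y ∈ H, m y y = 0) (hM : mprod m M M = ⊥)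
    (hx : M ⊔ span F {x} = H) : mprod m H H ≤ M.map (m x) := by
  have hxH : x ∈ H := hx ▸ mem_sup_right (mem_span_singleton_self x)
  have hMH : M ≤ H := hx ▸ le_sup_left
  refine map₂_le.mpr fun u hu v hv => ?_
  obtain ⟨a, ha, c, rfl⟩ := mem_sup_span_singleton.mp (hx.ge hu)
  obtain ⟨b, hb, d, rfl⟩ := mem_sup_span_singleton.mp (hx.ge hv)
  refine ⟨c • b - d • a, sub_mem (M.smul_mem c hb) (M.smul_mem d ha), ?_⟩
  simp only [map_add, map_sub, map_smul, LinearMap.add_apply, LinearMap.smul_apply, hH x hxH,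
    mprod_eq_bot_iff.mp hM a ha b hb, mul_eq_neg_of_forall_mul_self_eq_zero hH (hMH ha) hxH]
  module

theorem IsMinAbelianByLine.exists_mul_eq (hH : ∀ x ∈ H, m x x = 0) (h : IsMinAbelianByLine m H)
    {u : L} (hu : u ∈ mprod m H H) : ∃ x n, m x n = u ∧ m n u = 0 := by
  obtain ⟨M, x, hM, -, -, hMM, hx, -, hsup⟩ := h
  obtain ⟨n, hn, rfl⟩ := mprod_le_map_of_sup_span_eq hH (mprod_eq_bot_iff.mpr hMM) hsup hu
  exact ⟨x, n, rfl, hMM n hn _ (hM.2 x hx n hn).1⟩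

namespace HeisenbergRelations

theorem mprod_span_le {x y z : L} (h : HeisenbergRelations m x y z) :
    mprod m (span F {x, y, z}) (span F {x, y, z}) ≤ span F {z} := by
  obtain ⟨hyx, hxy, hxz, hzx, hyz, hzy, hxx, hyy, hzz⟩ := h
  rw [mprod, map₂_span_span, span_le, Set.image2_subset_iff]
  have hz : z ∈ span F {z} := mem_span_singleton_self z
  rintro a (rfl | rfl | rfl) b (rfl | rfl | rfl) <;>
    simp only [hyx, hxy, hxz, hzx, hyz, hzy, hxx, hyy, hzz, SetLike.mem_coe, zero_mem, hz,
      neg_mem_iff]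

theorem linearIndependent {x y z : L} (h : HeisenbergRelations m x y z) (hz : z ≠ 0) :
    LinearIndependent F ![x, y, z] := by
  obtain ⟨hyx, hxy, hxz, -, hyz, -, hxx, hyy, -⟩ := h
  refine Fintype.linearIndependent_iff.mpr fun g hg => ?_
  have habc : g 0 • x + g 1 • y + g 2 • z = 0 := (Fin.sum_univ_three _).symm.trans hg
  have ha : g 0 = 0 := by
    have hy := congrArg (m y) habc
    simp only [map_add, map_smul, map_zero, hyx, hyy, hyz, smul_zero, add_zero] at hy
    exact (smul_eq_zero_iff_left hz).mp hy
  have hb : g 1 = 0 := by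
    have hx := congrArg (m x) habc
    simp only [map_add, map_smul, map_zero, hxy, hxx, hxz, smul_zero, add_zero, zero_add,
      smul_neg, neg_eq_zero] at hx
    exact (smul_eq_zero_iff_left hz).mp hx
  have hc : g 2 = 0 := by
    rw [ha, hb, zero_smul, zero_smul, zero_add, zero_add] at habc
    exact (smul_eq_zero_iff_left hz).mp habc
  exact fun i => by fin_cases i; exacts [ha, hb, hc]

end HeisenbergRelations

theorem IsHeisenberg.exists_mul_eq (h : IsHeisenberg m H) {u : L} (hu : u ∈ mprod m H H) :
    ∃ x n, m x n = u ∧ m n u = 0 := by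
  obtain ⟨x, y, z, -, -, -, -, rfl, h⟩ := h
  obtain ⟨c, rfl⟩ := mem_span_singleton.mp (h.mprod_span_le hu)
  obtain ⟨hyx, -, hxz, -⟩ := h
  exact ⟨y, c • x, by rw [map_smul, hyx], by
    rw [map_smul, map_smul, LinearMap.smul_apply, hxz, smul_zero, smul_zero]⟩

theorem mprod_self_eq_bot_of_mprod_le_of_lt (hm : IsLeibniz m)
    (hsub : ∀ B < H, IsSubalg m B → IsIdealOf m H (mprod m B B) → mprod m B B = ⊥)
    (hHB : mprod m H H ≤ B) (hBH : B < H) : mprod m B B = ⊥ :=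
  have hB : IsIdealOf m H B := isIdealOf_of_mprod_le hBH.le hHB
  hsub B hBH hB.isSubalg (hB.mprod_self hm)

theorem disjoint_span_singleton_of_lt_of_sup_eq {x : L} (hMH : M < H) (hx : M ⊔ span F {x} = H) :
    Disjoint M (span F {x}) := by
  refine disjoint_span_singleton_of_notMem fun hxM => hMH.ne ?_
  rw [← hx, left_eq_sup, span_singleton_le_iff_mem]
  exact hxM

theorem disjoint_mprod_ker_of_sup_span_eq [FiniteDimensional F L] {x : L}
    (hH : ∀ y ∈ H, m y y = 0) (hab : mprod m (mprod m H H) (mprod m H H) = ⊥)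
    (hx : mprod m H H ⊔ span F {x} = H) : Disjoint (mprod m H H) (LinearMap.ker (m x)) := by
  have hxH : x ∈ H := hx ▸ mem_sup_right (mem_span_singleton_self x)
  have hDH : mprod m H H ≤ H := hx.le.trans' le_sup_left
  refine disjoint_ker_of_map_eq_self (le_antisymm ?_ (mprod_le_map_of_sup_span_eq hH hab hx))
  exact map_le_iff_le_comap.mpr fun y hy => apply_mem_map₂ m hxH (hDH hy)

/-- The proper subalgebra `B = J + Fx` has `B² = xJ`, an ideal of `H`, so `xJ = 0`. -/
theorem eq_bot_of_isIdealOf_of_lt {x : L} (hH : ∀ y ∈ H, m y y = 0)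
    (hsub : ∀ B < H, IsSubalg m B → IsIdealOf m H (mprod m B B) → mprod m B B = ⊥)
    (hM : mprod m M M = ⊥) (hMH : M < H) (hx : M ⊔ span F {x} = H)
    (hker : Disjoint M (LinearMap.ker (m x))) (hJ : IsIdealOf m H J) (hJM : J < M) : J = ⊥ := by
  set B := J ⊔ span F {x}
  have hxB : x ∈ B := mem_sup_right (mem_span_singleton_self x)
  have hBH : B ≤ H := hx ▸ sup_le_sup_right hJM.le _
  have hBM : B ⊓ M = J := by
    rw [sup_inf_assoc_of_le _ hJM.le, inf_comm,
      (disjoint_span_singleton_of_lt_of_sup_eq hMH hx).eq_bot, sup_bot_eq]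
  have hB_lt : B < H := hBH.lt_of_ne fun hB => hJM.ne (by rw [← hBM, hB, inf_eq_right.mpr hMH.le])
  have hBB : mprod m B B = J.map (m x) :=
    le_antisymm (mprod_le_map_of_sup_span_eq (fun y hy => hH y (hBH hy))
      (eq_bot_iff.mpr (hM ▸ map₂_le_map₂ hJM.le hJM.le)) rfl)
      (map_le_iff_le_comap.mpr fun y hy => apply_mem_map₂ m hxB (mem_sup_left hy))
  have hBBJ : mprod m B B ≤ J :=
    hBB ▸ map_le_iff_le_comap.mpr fun y hy => (hJ.2 x (hBH hxB) y hy).1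
  have hideal : IsIdealOf m H (mprod m B B) := by
    refine isIdealOf_of_forall_mul_self_eq_zero hH (hBBJ.trans hJ.1) fun h hh b hb => ?_
    obtain ⟨d, hd, c, rfl⟩ := mem_sup_span_singleton.mp (hx.ge hh)
    rw [map_add, LinearMap.add_apply, mprod_eq_bot_iff.mp hM d hd b (hJM.le (hBBJ hb)), zero_add,
      map_smul, LinearMap.smul_apply]
    exact smul_mem _ c (apply_mem_map₂ m hxB (mem_sup_left (hBBJ hb)))
  have hxJ : J.map (m x) = ⊥ :=
    hBB ▸ hsub B hB_lt (fun y hy z hz => mem_sup_left (hBBJ (apply_mem_map₂ m hy hz))) hideal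
  exact eq_bot_iff.mpr (hker hJM.le (LinearMap.le_ker_iff_map.mpr hxJ))

theorem isMinAbelianByLine_of_sup_span_eq [FiniteDimensional F L] (hm : IsLeibniz m) {x : L}
    (hH : ∀ y ∈ H, m y y = 0)
    (hsub : ∀ B < H, IsSubalg m B → IsIdealOf m H (mprod m B B) → mprod m B B = ⊥)
    (hbot : mprod m H H ≠ ⊥) (hlt : mprod m H H < H) (hx : mprod m H H ⊔ span F {x} = H) :
    IsMinAbelianByLine m H := by
  have hab := mprod_self_eq_bot_of_mprod_le_of_lt hm hsub le_rfl hlt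
  refine ⟨mprod m H H, x, isIdealOf_of_mprod_le hlt.le le_rfl, hbot, fun J hJ hJM => ?_,
    mprod_eq_bot_iff.mp hab, hx ▸ mem_sup_right (mem_span_singleton_self x),
    (disjoint_span_singleton_of_lt_of_sup_eq hlt hx).eq_bot, hx⟩
  exact hJM.eq_or_lt.symm.imp_left 
    (eq_bot_of_isIdealOf_of_lt hH hsub hab hlt hx (disjoint_mprod_ker_of_sup_span_eq hH hab hx) hJ)

theorem isHeisenberg_of_forall_mul_eq_zero (hH : ∀ y ∈ H, m y y = 0)
    (hsub : ∀ B < H, IsSubalg m B → IsIdealOf m H (mprod m B B) → mprod m B B = ⊥)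
    (hbot : mprod m H H ≠ ⊥) (hle : mprod m H H ≤ H)
    (hcentral : ∀ d ∈ mprod m H H, ∀ h ∈ H, m h d = 0) : IsHeisenberg m H := by
  obtain ⟨y, hy, x, hx, hyx⟩ : ∃ y ∈ H, ∃ x ∈ H, m y x ≠ 0 := by
    simpa only [ne_eq, mprod_eq_bot_iff, not_forall, exists_prop] using hbot
  have hzD : m y x ∈ mprod m H H := apply_mem_map₂ m hy hx
  have hanti {a b : L} (ha : a ∈ H) (hb : b ∈ H) : m a b = -m b a :=
    mul_eq_neg_of_forall_mul_self_eq_zero hH ha hb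
  have hleft (h) (hh : h ∈ H) : m (m y x) h = 0 := by
    rw [hanti (hle hzD) hh, hcentral _ hzD h hh, neg_zero]
  have hrel : HeisenbergRelations m x y (m y x) :=
    ⟨rfl, hanti hx hy, hcentral _ hzD x hx, hleft x hx, hcentral _ hzD y hy, hleft y hy,
      hH x hx, hH y hy, hH _ (hle hzD)⟩
  set B := span F {x, y, m y x}
  have hzB : m y x ∈ B := subset_span (by simp)
  have hBH : B ≤ H := span_le.mpr <| by rintro _ (rfl | rfl | rfl); exacts [hx, hy, hle hzD]
  have hBB : mprod m B B ≠ ⊥ := fun hBB => hyx <|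
    mprod_eq_bot_iff.mp hBB y (subset_span (by simp)) x (subset_span (by simp))
  have hsubB : IsSubalg m B :=
    map₂_le.mp (hrel.mprod_span_le.trans (span_singleton_le_iff_mem _ _ |>.mpr hzB))
  have hBBH : mprod m B B ≤ mprod m H H := map₂_le_map₂ hBH hBH
  have hideal : IsIdealOf m H (mprod m B B) :=
    isIdealOf_of_forall_mul_self_eq_zero hH (hBBH.trans hle) fun h hh b hb =>
      hcentral b (hBBH hb) h hh ▸ zero_mem _
  have hB : B = H := hBH.eq_of_not_lt fun hlt => hBB (hsub B hlt hsubB hideal)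
  exact ⟨x, y, m y x, hx, hy, hle hzD, hrel.linearIndependent hyx, hB, hrel⟩

theorem isMinAbelianByLine_or_isHeisenberg [FiniteDimensional F L] (hm : IsLeibniz m)
    (hH : ∀ y ∈ H, m y y = 0)
    (hsub : ∀ B < H, IsSubalg m B → IsIdealOf m H (mprod m B B) → mprod m B B = ⊥)
    (hbot : mprod m H H ≠ ⊥) (hlt : mprod m H H < H) :
    IsMinAbelianByLine m H ∨ IsHeisenberg m H := by
  by_cases hline : ∃ x, mprod m H H ⊔ span F {x} = H
  · obtain ⟨x, hx⟩ := hline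
    exact .inl (isMinAbelianByLine_of_sup_span_eq hm hH hsub hbot hlt hx)
  · push Not at hline
    refine .inr (isHeisenberg_of_forall_mul_eq_zero hH hsub hbot hlt.le fun d hd h hh => ?_)
    have hspan : mprod m H H ⊔ span F {h} < H :=
      (sup_le hlt.le ((span_singleton_le_iff_mem _ _).mpr hh)).lt_of_ne (hline h)
    exact mprod_eq_bot_iff.mp (mprod_self_eq_bot_of_mprod_le_of_lt hm hsub le_sup_left hspan) h
      (mem_sup_right (mem_span_singleton_self h)) d (mem_sup_left hd)

theorem IsSplitting.exists_charP [FiniteDimensional F L] (hm : IsLeibniz m)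
    (h : IsSplitting m A H) (huniq : ∀ A', IsMinIdeal m A' → A' = A) (hbot : mprod m H H ≠ ⊥)
    (hab : mprod m (mprod m H H) (mprod m H H) = ⊥)
    (hmul : ∀ u ∈ mprod m H H, ∃ x n, m x n = u ∧ m n u = 0) : ∃ p : ℕ, p ≠ 0 ∧ CharP F p := by
  rcases CharP.exists' F with _ | ⟨p, hp, hFp⟩
  · have hideal : IsIdealOf m H (mprod m H H) := isIdealOf_of_mprod_le h.isSubalg.mprod_le le_rfl
    refine absurd (h.eq_bot_of_forall_isNilpotent hm huniq hideal hab fun u hu => ?_) hbot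
    obtain ⟨x, n, rfl, hn⟩ := hmul u hu
    exact hm.isNilpotent_mul_of_mul_eq_zero hn
  · exact ⟨p, hp.out.ne_zero, hFp⟩

end Leibniz

/-- Let `L` be a finite-dimensional solvable Leibniz algebra over a
field `F` with `φ(L) = 0` which is minimally non-strongly-solvable. Then `F` has
characteristic `p > 0`, and `L = A + H` is a semidirect sum where (1) `A` is the unique
minimal ideal of `L`, (2) `dim A ≥ 2`, (3) `A·A = 0`, and (4) either `H = M ∔ Fx` with
`M` a minimal abelian ideal of `H`, or `H` is the three-dimensional Heisenberg algebra.
Moreover, either `L` is a Lie algebra, or else `H` is a Lie algebra, `A = Leib(L)`, and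
`A·L = 0`. -/
theorem minimally_non_strongly_solvable_structure
    {F : Type*} [Field F] {L : Type*} [AddCommGroup L] [Module F L]
    [FiniteDimensional F L]
    (m : L →ₗ[F] L →ₗ[F] L) (hm : IsLeibniz m)
    (hsolv : IsSolvableAlg m)
    (hphi : frattiniIdeal m = ⊥)
    (hnotss : ¬ IsStronglySolvable m (⊤ : Submodule F L))
    (hproper : ∀ S : Submodule F L, IsSubalg m S → S ≠ ⊤ → IsStronglySolvable m S) :
    (∃ p : ℕ, p ≠ 0 ∧ CharP F p) ∧
    ∃ A H : Submodule F L,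
      IsMinIdeal m A ∧ (∀ A', IsMinIdeal m A' → A' = A) ∧
      IsSubalg m H ∧ A ⊓ H = ⊥ ∧ A ⊔ H = ⊤ ∧
      2 ≤ Module.finrank F A ∧
      (∀ a ∈ A, ∀ b ∈ A, m a b = 0) ∧
      ((∃ (M : Submodule F L) (x : L),
          IsIdealOf m H M ∧ M ≠ ⊥ ∧
          (∀ J, IsIdealOf m H J → J ≤ M → J = ⊥ ∨ J = M) ∧
          (∀ a ∈ M, ∀ b ∈ M, m a b = 0) ∧
          x ∈ H ∧ M ⊓ Submodule.span F {x} = ⊥ ∧ M ⊔ Submodule.span F {x} = H) ∨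
        (∃ x y z : L, x ∈ H ∧ y ∈ H ∧ z ∈ H ∧
          LinearIndependent F ![x, y, z] ∧ Submodule.span F {x, y, z} = H ∧
          m y x = z ∧ m x y = - z ∧ m x z = 0 ∧ m z x = 0 ∧ m y z = 0 ∧ m z y = 0 ∧
          m x x = 0 ∧ m y y = 0 ∧ m z z = 0)) ∧
      (IsLie m ∨
        ((∀ h ∈ H, ∀ k ∈ H, m h k = - m k h) ∧ A = leibIdeal m ∧
          (∀ a ∈ A, ∀ u : L, m a u = 0))) := by
  obtain ⟨A, H, h, huniq⟩ := exists_isSplitting hm hsolv hphi hnotss hproper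
  have hsq : ∀ x ∈ H, m x x = 0 := h.mul_self_eq_zero hm huniq
  have hbot : mprod m H H ≠ ⊥ := h.mprod_self_ne_bot hnotss
  have hlt : mprod m H H < H := h.isSubalg.mprod_le.lt_of_not_ge fun hle =>
    hbot (hsolv.eq_bot_of_le_mprod_self le_top hle ▸ map₂_bot_left m _)
  have hsub : ∀ B < H, IsSubalg m B → IsIdealOf m H (mprod m B B) → mprod m B B = ⊥ :=
    fun B hBH hB => h.mprod_self_eq_bot_of_isStronglySolvable_sup hm huniq hB <|
      hproper _ (h.isMinIdeal.1.isSubalg_sup hB) (h.sup_ne_top_of_lt hBH)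
  have hab := mprod_self_eq_bot_of_mprod_le_of_lt hm hsub le_rfl hlt
  have hH := isMinAbelianByLine_or_isHeisenberg hm hsq hsub hbot hlt
  have hmul : ∀ u ∈ mprod m H H, ∃ x n, m x n = u ∧ m n u = 0 := fun u hu =>
    hH.elim (fun hH => hH.exists_mul_eq hsq hu) fun hH => hH.exists_mul_eq hu
  refine ⟨h.exists_charP hm huniq hbot hab hmul, A, H, h.isMinIdeal, huniq, h.isSubalg,
    h.isCompl.inf_eq_bot, h.isCompl.sup_eq_top, h.two_le_finrank hm huniq hbot,
    mprod_eq_bot_iff.mp h.mprod_self, hH, ?_⟩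
  refine (h.isLie_or_eq_leibIdeal hm huniq).imp_right fun hA => ⟨fun a ha b hb => ?_, hA, ?_⟩
  · exact mul_eq_neg_of_forall_mul_self_eq_zero hsq ha hb
  · exact fun a ha u => hm.mul_eq_zero_of_mem_leibIdeal (hA ▸ ha) u
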